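/- arXiv:2204.00580 — 3 statements merged into one kernel-verified Lean document; each statement's English description precedes it below -/
import Mathlib

section
/- For every δ > 0 and γ > 0, the interval [x* − δ, x* + δ] is forward invariant for the average system: if xₐ is a solution of ẋₐ = −(γ/2)·b₁δ(xₐ) and |xₐ(t₀) − x*| ≤ δ for some t₀ ≥ 0, then |xₐ(t) − x*| ≤ δ for all t ≥ t₀. -/
open Real MeasureTheory intervalIntegral Filter

/-- First Fourier sine coefficient of `t ↦ h (x + δ sin (2π t))`. -/
noncomputable def b1 (h : ℝ → ℝ) (δ x : ℝ) : ℝ :=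
  2 * ∫ t in (0:ℝ)..1, h (x + δ * Real.sin (2 * Real.pi * t)) * Real.sin (2 * Real.pi * t)

/-!
Since the sine has mean zero, `b1 h δ x` is twice the mean of `(h (x + δ s) - h x) * s` along
`s = sin (2π t)`, so it has a sign as soon as `h` is monotone on `[x - δ, x + δ]`. Assumption 2
makes `h` injective on either side of its minimiser, hence decreasing to the left of it and
increasing to the right. When `xa` leaves `[x* - δ, x* + δ]`, the probing window
`[xa - δ, xa + δ]` lies on a single side of `x*`, so the vector field points back inwards.
-/

open Set

section Monotonicity

theorem injOn_of_le_dist {X Y : Type*} [MetricSpace X] [PseudoMetricSpace Y] {f : X → Y}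
    {s : Set X} {α : ℝ → ℝ} (hα : ∀ r, 0 < r → 0 < α r)
    (hf : ∀ x ∈ s, ∀ y ∈ s, α (dist x y) ≤ dist (f x) (f y)) : InjOn f s := by
  intro x hx y hy hxy
  by_contra hne
  have hpos : 0 < dist (f x) (f y) := (hα _ (dist_pos.2 hne)).trans_le (hf x hx y hy)
  rw [hxy, dist_self] at hpos
  exact hpos.false

variable {X Y : Type*} [ConditionallyCompleteLinearOrder X] [DenselyOrdered X]
  [TopologicalSpace X] [OrderTopology X] [LinearOrder Y] [TopologicalSpace Y]
  [OrderClosedTopology Y] {f : X → Y} {a : X}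

theorem strictMonoOn_Ici_of_injOn (hcont : ContinuousOn f (Ici a)) (hinj : InjOn f (Ici a))
    (hmin : ∀ x ∈ Ici a, f a ≤ f x) : StrictMonoOn f (Ici a) := fun _ hx y hy hxy =>
  ContinuousOn.strictMonoOn_of_injOn_Icc hy (hmin y hy) (hcont.mono Icc_subset_Ici_self)
    (hinj.mono Icc_subset_Ici_self) ⟨hx, hxy.le⟩ ⟨hy, le_rfl⟩ hxy

theorem strictAntiOn_Iic_of_injOn (hcont : ContinuousOn f (Iic a)) (hinj : InjOn f (Iic a))
    (hmin : ∀ x ∈ Iic a, f a ≤ f x) : StrictAntiOn f (Iic a) := fun x hx _ hy hxy =>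
  ContinuousOn.strictAntiOn_of_injOn_Icc hx (hmin x hx) (hcont.mono Icc_subset_Iic_self)
    (hinj.mono Icc_subset_Iic_self) ⟨le_rfl, hx⟩ ⟨hxy.le, hy⟩ hxy

theorem strictAntiOn_Iic_and_strictMonoOn_Ici_of_le_abs_sub {h α : ℝ → ℝ} {a : ℝ}
    (hcont : Continuous h) (hmin : ∀ x, h a ≤ h x) (hα : ∀ r, 0 < r → 0 < α r)
    (hlb : ∀ x₁ x₂, 0 ≤ (x₁ - a) * (x₂ - a) → α |x₂ - x₁| ≤ |h x₂ - h x₁|) :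
    StrictAntiOn h (Iic a) ∧ StrictMonoOn h (Ici a) := by
  have hinj_left : InjOn h (Iic a) := injOn_of_le_dist hα fun x hx y hy =>
    hlb y x (mul_nonneg_of_nonpos_of_nonpos (sub_nonpos.2 hy) (sub_nonpos.2 hx))
  have hinj_right : InjOn h (Ici a) := injOn_of_le_dist hα fun x hx y hy =>
    hlb y x (mul_nonneg (sub_nonneg.2 hy) (sub_nonneg.2 hx))
  exact ⟨strictAntiOn_Iic_of_injOn hcont.continuousOn hinj_left fun x _ => hmin x,
    strictMonoOn_Ici_of_injOn hcont.continuousOn hinj_right fun x _ => hmin x⟩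

end Monotonicity

section FourierCoefficient

theorem integrable_comp_mul_self {Ω : Type*} [MeasurableSpace Ω] {μ : Measure Ω} {g : ℝ → ℝ}
    (hg : Monotone g) {φ : Ω → ℝ} {C : ℝ} (hφ : Integrable φ μ) (hC : ∀ᵐ ω ∂μ, |φ ω| ≤ C) :
    Integrable (fun ω => g (φ ω) * φ ω) μ := by
  refine hφ.bdd_mul (c := max |g (-C)| |g C|)
    (hg.measurable.comp_aemeasurable hφ.aemeasurable).aestronglyMeasurable ?_
  filter_upwards [hC] with ω hω
  exact abs_le_max_abs_abs (hg (abs_le.1 hω).1) (hg (abs_le.1 hω).2)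

theorem integral_comp_mul_self_nonneg {Ω : Type*} [MeasurableSpace Ω] {μ : Measure Ω} {g : ℝ → ℝ}
    (hg : Monotone g) {φ : Ω → ℝ} {C : ℝ} (hφ : Integrable φ μ) (hC : ∀ᵐ ω ∂μ, |φ ω| ≤ C)
    (hmean : ∫ ω, φ ω ∂μ = 0) : 0 ≤ ∫ ω, g (φ ω) * φ ω ∂μ := by
  have hsign (s : ℝ) : 0 ≤ (g s - g 0) * s := by
    rcases le_total 0 s with hs | hs
    · exact mul_nonneg (sub_nonneg.2 (hg hs)) hs
    · exact mul_nonneg_of_nonpos_of_nonpos (sub_nonpos.2 (hg hs)) hs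
  calc 0 ≤ ∫ ω, (g (φ ω) - g 0) * φ ω ∂μ := integral_nonneg fun ω => hsign (φ ω)
    _ = ∫ ω, g (φ ω) * φ ω ∂μ := by
      simp_rw [sub_mul]
      rw [integral_sub (integrable_comp_mul_self hg hφ hC) (hφ.const_mul _),
        MeasureTheory.integral_const_mul, hmean, mul_zero, sub_zero]

theorem integral_sin_two_pi_mul : ∫ t in (0 : ℝ)..1, sin (2 * π * t) = 0 := by
  rw [intervalIntegral.integral_comp_mul_left (fun t => sin t) two_pi_pos.ne']
  simp

theorem b1_nonneg_of_monotone {h : ℝ → ℝ} {δ : ℝ} (hδ : 0 ≤ δ) (hmono : Monotone h) (x : ℝ) :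
    0 ≤ b1 h δ x := by
  have hg : Monotone fun s => h (x + δ * s) := fun _ _ hst => hmono (by gcongr)
  have hint : IntervalIntegrable (fun t => sin (2 * π * t)) volume 0 1 :=
    Continuous.intervalIntegrable (by fun_prop) _ _
  have hmean := integral_sin_two_pi_mul
  rw [intervalIntegral.integral_of_le zero_le_one] at hmean
  rw [b1, intervalIntegral.integral_of_le zero_le_one]
  exact mul_nonneg zero_le_two (integral_comp_mul_self_nonneg hg hint.1
    (Eventually.of_forall fun t => abs_sin_le_one _) hmean)

theorem b1_congr {h k : ℝ → ℝ} {δ x : ℝ} (hδ : 0 ≤ δ) (hhk : EqOn h k (Icc (x - δ) (x + δ))) :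
    b1 h δ x = b1 k δ x := by
  have hmem (t : ℝ) : x + δ * sin (2 * π * t) ∈ Icc (x - δ) (x + δ) :=
    ⟨by nlinarith [neg_one_le_sin (2 * π * t)], by nlinarith [sin_le_one (2 * π * t)]⟩
  simp_rw [b1, hhk (hmem _)]

theorem b1_neg (h : ℝ → ℝ) (δ x : ℝ) : b1 (-h) δ x = -b1 h δ x := by
  simp [b1]

theorem b1_nonneg_of_monotoneOn {h : ℝ → ℝ} {δ x : ℝ} (hδ : 0 ≤ δ)
    (hmono : MonotoneOn h (Icc (x - δ) (x + δ))) : 0 ≤ b1 h δ x := by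
  have hle : x - δ ≤ x + δ := by linarith
  obtain ⟨k, hk, hhk⟩ := hmono.exists_monotone_extension
    (hmono.map_bddBelow Subset.rfl ⟨_, fun _ hy => hy.1, left_mem_Icc.2 hle⟩)
    (hmono.map_bddAbove Subset.rfl ⟨_, fun _ hy => hy.2, right_mem_Icc.2 hle⟩)
  rw [b1_congr hδ hhk]
  exact b1_nonneg_of_monotone hδ hk x

theorem b1_nonpos_of_antitoneOn {h : ℝ → ℝ} {δ x : ℝ} (hδ : 0 ≤ δ)
    (hanti : AntitoneOn h (Icc (x - δ) (x + δ))) : b1 h δ x ≤ 0 := by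
  have hneg : 0 ≤ b1 (-h) δ x := b1_nonneg_of_monotoneOn hδ hanti.neg
  rwa [b1_neg, neg_nonneg] at hneg

end FourierCoefficient

section Barrier

variable {f f' : ℝ → ℝ} {a b c : ℝ}

theorem image_le_of_deriv_right_nonpos_of_lt (hf : ContinuousOn f (Icc a b))
    (hf' : ∀ t ∈ Ico a b, HasDerivWithinAt f (f' t) (Ici t) t) (ha : f a ≤ c)
    (hbound : ∀ t ∈ Ico a b, c < f t → f' t ≤ 0) : ∀ ⦃t⦄, t ∈ Icc a b → f t ≤ c := by
  intro t ht
  -- A barrier of positive slope lying strictly above `c` cannot be crossed.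
  have hbarrier : ∀ ε > 0, f t ≤ c + ε * (t - a + 1) := by
    intro ε hε
    have habove (s : ℝ) (hs : a ≤ s) : c < c + ε * (s - a + 1) :=
      lt_add_of_pos_right c (mul_pos hε (by linarith))
    refine image_le_of_deriv_right_lt_deriv_boundary (B := fun s => c + ε * (s - a + 1))
      (B' := fun _ => ε) hf hf' (ha.trans (habove a le_rfl).le) (fun s => ?_)
      (fun s hs hfs => ?_) ht
    · simpa using ((((hasDerivAt_id s).sub_const a).add_const 1).const_mul ε).const_add c
    · exact (hbound s hs (hfs ▸ habove s hs.1)).trans_lt hε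
  have hlim : Tendsto (fun ε => c + ε * (t - a + 1)) (nhdsWithin 0 (Ioi 0)) (nhds c) :=
    Continuous.tendsto' (by fun_prop) 0 c (by simp) |>.mono_left nhdsWithin_le_nhds
  exact ge_of_tendsto hlim (eventually_mem_nhdsWithin.mono hbarrier)

theorem le_image_of_deriv_right_nonneg_of_lt (hf : ContinuousOn f (Icc a b))
    (hf' : ∀ t ∈ Ico a b, HasDerivWithinAt f (f' t) (Ici t) t) (ha : c ≤ f a)
    (hbound : ∀ t ∈ Ico a b, f t < c → 0 ≤ f' t) : ∀ ⦃t⦄, t ∈ Icc a b → c ≤ f t := by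
  intro t ht
  exact neg_le_neg_iff.1 <| image_le_of_deriv_right_nonpos_of_lt hf.neg
    (fun s hs => (hf' s hs).neg) (neg_le_neg ha)
    (fun s hs hlt => neg_nonpos.2 (hbound s hs (neg_lt_neg_iff.1 hlt))) ht

end Barrier

theorem average_forward_invariance_general {h xa : ℝ → ℝ} {xstar δ γ t₀ : ℝ}
    (hanti : AntitoneOn h (Iic xstar)) (hmono : MonotoneOn h (Ici xstar)) (hγ : 0 ≤ γ)
    (hsol : ∀ t, t₀ ≤ t → HasDerivWithinAt xa (-(γ / 2) * b1 h δ (xa t)) (Ici t₀) t)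
    (hinit : |xa t₀ - xstar| ≤ δ) : ∀ t, t₀ ≤ t → |xa t - xstar| ≤ δ := by
  intro t ht
  have hδ : 0 ≤ δ := (abs_nonneg _).trans hinit
  have hgain : -(γ / 2) ≤ 0 := by linarith
  obtain ⟨hinit_lower, hinit_upper⟩ := abs_le.1 hinit
  have hcont : ContinuousOn xa (Icc t₀ t) := fun s hs =>
    (hsol s hs.1).continuousWithinAt.mono Icc_subset_Ici_self
  have hderiv : ∀ s ∈ Ico t₀ t, HasDerivWithinAt xa (-(γ / 2) * b1 h δ (xa s)) (Ici s) s :=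
    fun s hs => (hsol s hs.1).mono (Ici_subset_Ici.2 hs.1)
  have hupper : xa t ≤ xstar + δ := by
    refine image_le_of_deriv_right_nonpos_of_lt hcont hderiv (by linarith)
      (fun s _ hs => mul_nonpos_of_nonpos_of_nonneg hgain ?_) ⟨ht, le_rfl⟩
    exact b1_nonneg_of_monotoneOn hδ (hmono.mono fun y hy => mem_Ici.2 (by linarith [hy.1]))
  have hlower : xstar - δ ≤ xa t := by
    refine le_image_of_deriv_right_nonneg_of_lt hcont hderiv (by linarith)
      (fun s _ hs => mul_nonneg_of_nonpos_of_nonpos hgain ?_) ⟨ht, le_rfl⟩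
    exact b1_nonpos_of_antitoneOn hδ (hanti.mono fun y hy => mem_Iic.2 (by linarith [hy.2]))
  exact abs_le.2 ⟨by linarith, by linarith⟩

/-- forward invariance of `[x* - δ, x* + δ]` for the average system. -/
theorem average_forward_invariance (h : ℝ → ℝ) (hsmooth : ContDiff ℝ (⊤ : ℕ∞) h)
    (xstar : ℝ) (hmin : ∀ x : ℝ, x ≠ xstar → h xstar < h x)
    (α : ℝ → ℝ) (hα_cont : ContinuousOn α (Set.Ici 0))
    (hα_mono : StrictMonoOn α (Set.Ici 0)) (hα0 : α 0 = 0)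
    (hα_top : Tendsto α atTop atTop)
    (hlb : ∀ x₁ x₂ : ℝ, (x₁ - xstar) * (x₂ - xstar) ≥ 0 → α |x₂ - x₁| ≤ |h x₂ - h x₁|)
    (δ γ : ℝ) (hδ : 0 < δ) (hγ : 0 < γ)
    (xa : ℝ → ℝ) (hdiff : Differentiable ℝ xa)
    (hsol : ∀ t : ℝ, 0 ≤ t → HasDerivAt xa (-(γ / 2) * b1 h δ (xa t)) t)
    (t₀ : ℝ) (ht₀ : 0 ≤ t₀) (hinit : |xa t₀ - xstar| ≤ δ) :
    ∀ t : ℝ, t₀ ≤ t → |xa t - xstar| ≤ δ := by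
  have hα_pos : ∀ r, 0 < r → 0 < α r := fun r hr => hα0 ▸ hα_mono self_mem_Ici hr.le hr
  have hmin_le : ∀ x, h xstar ≤ h x := fun x => by
    rcases eq_or_ne x xstar with rfl | hx
    · exact le_rfl
    · exact (hmin x hx).le
  obtain ⟨hanti, hmono⟩ :=
    strictAntiOn_Iic_and_strictMonoOn_Ici_of_le_abs_sub hsmooth.continuous hmin_le hα_pos hlb
  exact average_forward_invariance_general hanti.antitoneOn hmono.monotoneOn hγ.le
    (fun t ht => (hsol t (ht₀.trans ht)).hasDerivWithinAt) hinit
end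

section
/- If the function h̄(s) := h(x* + s) − h(x*) is even, then for every δ > 0 one has (x − x*)·b₁δ(x) > 0 for all x ≠ x*; consequently x* is the unique equilibrium of the average system ẋₐ = −(γ/2)·b₁δ(xₐ), and every solution xₐ of the average system on [0,∞) converges to x* as t → ∞. -/
open Real MeasureTheory intervalIntegral Filter

/-!
Substituting `t ↦ 1 - t` in the Fourier integral gives
`b₁(x) = ∫₀¹ (h(x + δ sin 2πt) - h(x - δ sin 2πt)) sin 2πt dt`. The lower bound `α` makes `h`
injective on `[x*, ∞)`, hence strictly increasing there, being continuous with minimum at `x*`. By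
evenness `h` then orders points by their distance to `x*`. As `(x - x* + r)² - (x - x* - r)²` equals
`4 (x - x*) r`, the integrand times `x - x*` is positive wherever `sin 2πt ≠ 0`. Convergence follows
from the Lyapunov function `|x - x*|²`: a solution staying away from `x*` would remain in a compact
annulus, on which this function decreases at a rate bounded away from zero.
-/

section Monotonicity

theorem injOn_of_comp_dist_le {X Y : Type*} [MetricSpace X] [PseudoMetricSpace Y] {f : X → Y}
    {s : Set X} {α : ℝ → ℝ} (hα : ∀ r, 0 < r → 0 < α r)
    (hf : ∀ x ∈ s, ∀ y ∈ s, α (dist x y) ≤ dist (f x) (f y)) : s.InjOn f := by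
  intro x hx y hy hxy
  by_contra hne
  have hle := hf x hx y hy
  rw [hxy, dist_self] at hle
  exact (hα _ (dist_pos.2 hne)).not_ge hle

theorem strictMonoOn_Ici_of_injOn_s8 {X Y : Type*} [ConditionallyCompleteLinearOrder X]
    [DenselyOrdered X] [TopologicalSpace X] [OrderTopology X] [LinearOrder Y] [TopologicalSpace Y]
    [OrderClosedTopology Y] {f : X → Y} {a : X} (hf : ContinuousOn f (Set.Ici a))
    (hmin : IsMinOn f (Set.Ici a) a) (hinj : (Set.Ici a).InjOn f) :
    StrictMonoOn f (Set.Ici a) := by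
  intro x hx y hy hxy
  have hmono : StrictMonoOn f (Set.Icc a y) :=
    ContinuousOn.strictMonoOn_of_injOn_Icc hy (hmin hy) (hf.mono Set.Icc_subset_Ici_self)
      (hinj.mono Set.Icc_subset_Ici_self)
  exact hmono ⟨hx, hxy.le⟩ ⟨hy, le_rfl⟩ hxy

theorem strictMonoOn_Ici_of_comp_abs_sub_le {h α : ℝ → ℝ} {c : ℝ} (hh : Continuous h)
    (hmin : ∀ x, x ≠ c → h c < h x) (hα : StrictMonoOn α (Set.Ici 0)) (hα0 : α 0 = 0)
    (hlb : ∀ x y, (x - c) * (y - c) ≥ 0 → α |y - x| ≤ |h y - h x|) :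
    StrictMonoOn h (Set.Ici c) := by
  have hminOn : IsMinOn h (Set.Ici c) c := isMinOn_iff.2 fun x _ =>
    (eq_or_ne c x).elim (fun hx => (congrArg h hx).le) fun hx => (hmin x hx.symm).le
  have hα_pos : ∀ r, 0 < r → 0 < α r := fun r hr => hα0 ▸ hα Set.self_mem_Ici hr.le hr
  have hinj : (Set.Ici c).InjOn h := injOn_of_comp_dist_le hα_pos fun x hx y hy =>
    hlb y x (mul_nonneg (sub_nonneg.2 hy) (sub_nonneg.2 hx))
  exact strictMonoOn_Ici_of_injOn_s8 hh.continuousOn hminOn hinj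

end Monotonicity

section EvenFunctions

section OrderedGroup

variable {G Y : Type*} [AddCommGroup G] [LinearOrder G] {h : G → Y} {c : G}

theorem apply_add_abs_of_even (heven : Function.Even fun s => h (c + s)) (s : G) :
    h (c + |s|) = h (c + s) := by
  rcases abs_choice s with hs | hs
  · rw [hs]
  · rw [hs]
    exact heven s

theorem apply_lt_apply_of_abs_sub_lt [IsOrderedAddMonoid G] [Preorder Y]
    (hmono : StrictMonoOn h (Set.Ici c)) (heven : Function.Even fun s => h (c + s)) {x y : G}
    (hxy : |x - c| < |y - c|) : h x < h y := by
  have hlt : h (c + |x - c|) < h (c + |y - c|) :=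
    hmono (Set.mem_Ici.2 <| le_add_of_nonneg_right <| abs_nonneg _)
      (Set.mem_Ici.2 <| le_add_of_nonneg_right <| abs_nonneg _) (add_lt_add_right hxy c)
  simpa only [apply_add_abs_of_even heven, add_sub_cancel] using hlt

end OrderedGroup

section OrderedRing

variable {R : Type*} [CommRing R] [LinearOrder R] [IsStrictOrderedRing R] {h : R → R} {c : R}

theorem apply_sub_lt_apply_add (hmono : StrictMonoOn h (Set.Ici c))
    (heven : Function.Even fun s => h (c + s)) {x r : R} (hr : 0 < (x - c) * r) :
    h (x - r) < h (x + r) := by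
  refine apply_lt_apply_of_abs_sub_lt hmono heven (sq_lt_sq.1 ?_)
  linear_combination 4 * hr

theorem mul_apply_add_sub_apply_sub_pos (hmono : StrictMonoOn h (Set.Ici c))
    (heven : Function.Even fun s => h (c + s)) {x r : R} (hx : x ≠ c) (hr : r ≠ 0) :
    0 < (x - c) * r * (h (x + r) - h (x - r)) := by
  rcases lt_or_gt_of_ne (mul_ne_zero (sub_ne_zero.2 hx) hr) with hneg | hpos
  · have hlt := apply_sub_lt_apply_add hmono heven (x := x) (r := -r) (by linarith)
    rw [sub_neg_eq_add, ← sub_eq_add_neg] at hlt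
    exact mul_pos_of_neg_of_neg hneg (sub_neg.2 hlt)
  · exact mul_pos hpos (sub_pos.2 (apply_sub_lt_apply_add hmono heven hpos))

end OrderedRing

end EvenFunctions

section FourierCoefficient

theorem integral_comp_neg_sin_two_pi_mul {E : Type*} [NormedAddCommGroup E] [NormedSpace ℝ E]
    (f : ℝ → E) :
    ∫ t in (0 : ℝ)..1, f (-sin (2 * π * t)) = ∫ t in (0 : ℝ)..1, f (sin (2 * π * t)) := by
  have hreflect : ∀ t : ℝ, sin (2 * π * (1 - t)) = -sin (2 * π * t) := fun t => by
    rw [mul_one_sub, sin_two_pi_sub]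
  simpa only [hreflect, sub_self, sub_zero] using
    integral_comp_sub_left (a := 0) (b := 1) (fun t => f (sin (2 * π * t))) 1

variable {h : ℝ → ℝ}

theorem b1_eq_integral_sub (hh : Continuous h) (δ x : ℝ) :
    b1 h δ x = ∫ t in (0 : ℝ)..1,
      (h (x + δ * sin (2 * π * t)) - h (x - δ * sin (2 * π * t))) * sin (2 * π * t) := by
  have hreflect := integral_comp_neg_sin_two_pi_mul fun s => h (x + δ * s) * s
  simp only [mul_neg, ← sub_eq_add_neg, intervalIntegral.integral_neg] at hreflect
  simp only [sub_mul]
  rw [integral_sub (Continuous.intervalIntegrable (by fun_prop) _ _)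
    (Continuous.intervalIntegrable (by fun_prop) _ _), b1]
  linarith

theorem continuous_b1 (hh : Continuous h) (δ : ℝ) : Continuous (b1 h δ) := by
  unfold b1
  fun_prop

variable {c δ : ℝ}

theorem b1_eq_zero_of_even (hh : Continuous h) (heven : Function.Even fun s => h (c + s)) :
    b1 h δ c = 0 := by
  have hsymm : ∀ s, h (c - s) = h (c + s) := heven
  simp only [b1_eq_integral_sub hh, hsymm, sub_self, zero_mul, intervalIntegral.integral_zero]

theorem mul_b1_pos (hh : Continuous h) (hmono : StrictMonoOn h (Set.Ici c))
    (heven : Function.Even fun s => h (c + s)) (hδ : δ ≠ 0) {x : ℝ} (hx : x ≠ c) :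
    0 < δ * ((x - c) * b1 h δ x) := by
  set r : ℝ → ℝ := fun t => δ * sin (2 * π * t) with hr
  have hint : δ * ((x - c) * b1 h δ x) =
      ∫ t in (0 : ℝ)..1, (x - c) * r t * (h (x + r t) - h (x - r t)) := by
    rw [b1_eq_integral_sub hh, ← mul_assoc, ← intervalIntegral.integral_const_mul]
    congr with t
    ring
  have hpos : ∀ t, r t ≠ 0 → 0 < (x - c) * r t * (h (x + r t) - h (x - r t)) := fun _ =>
    mul_apply_add_sub_apply_sub_pos hmono heven hx
  rw [hint]
  refine integral_pos zero_lt_one (by fun_prop) (fun t _ => ?_) ⟨1 / 4, by norm_num, hpos _ ?_⟩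
  · rcases eq_or_ne (r t) 0 with h0 | h0
    · simp [h0]
    · exact (hpos t h0).le
  · have hquarter : 2 * π * (1 / 4) = π / 2 := by ring
    simpa only [hr, hquarter, sin_pi_div_two, mul_one] using hδ

end FourierCoefficient

section Lyapunov

variable {E : Type*} [NormedAddCommGroup E] [InnerProductSpace ℝ E] {v : E → E} {x : ℝ → E} {p : E}

theorem antitoneOn_norm_sub_sq_add_of_inner_le {m : ℝ}
    (hx : IsIntegralCurveOn x (fun _ => v) (Set.Ici 0))
    (hm : ∀ t ∈ Set.Ici (0 : ℝ), inner ℝ (x t - p) (v (x t)) ≤ -m) :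
    AntitoneOn (fun t => ‖x t - p‖ ^ 2 + 2 * m * t) (Set.Ici 0) := by
  have hderiv : ∀ t ∈ Set.Ici (0 : ℝ), HasDerivWithinAt (fun t => ‖x t - p‖ ^ 2 + 2 * m * t)
      (2 * inner ℝ (x t - p) (v (x t)) + 2 * m) (Set.Ici 0) t := fun t ht => by
    simpa only [mul_one] using ((hx t ht).sub_const p).norm_sq.fun_add
      ((hasDerivAt_id' t).hasDerivWithinAt.const_mul (2 * m))
  refine antitoneOn_of_hasDerivWithinAt_nonpos (convex_Ici 0)
    (fun t ht => (hderiv t ht).continuousWithinAt)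
    (fun t ht => (hderiv t (interior_subset ht)).mono interior_subset) fun t ht => ?_
  linarith [hm t (interior_subset ht)]

theorem antitoneOn_dist_of_inner_nonpos (hx : IsIntegralCurveOn x (fun _ => v) (Set.Ici 0))
    (hv : ∀ y, inner ℝ (y - p) (v y) ≤ 0) :
    AntitoneOn (fun t => dist (x t) p) (Set.Ici 0) := by
  intro s hs t ht hst
  have hsq := antitoneOn_norm_sub_sq_add_of_inner_le (m := 0) (p := p) hx
    (fun t _ => by simpa using hv (x t)) hs ht hst
  simp only [mul_zero, zero_mul, add_zero, ← dist_eq_norm] at hsq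
  exact le_of_sq_le_sq hsq dist_nonneg

theorem exists_dist_lt_of_inner_le {m ε : ℝ} (hx : IsIntegralCurveOn x (fun _ => v) (Set.Ici 0))
    (hm : 0 < m) (hε : 0 < ε)
    (hrate : ∀ t ∈ Set.Ici (0 : ℝ), ε ≤ dist (x t) p → inner ℝ (x t - p) (v (x t)) ≤ -m) :
    ∃ t ∈ Set.Ici (0 : ℝ), dist (x t) p < ε := by
  by_contra! hfar
  set T := ‖x 0 - p‖ ^ 2 / (2 * m)
  have hT : 0 ≤ T := by positivity
  have hle := antitoneOn_norm_sub_sq_add_of_inner_le hx (fun t ht => hrate t ht (hfar t ht))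
    Set.self_mem_Ici hT hT
  have hmT : 2 * m * T = ‖x 0 - p‖ ^ 2 := mul_div_cancel₀ _ (by positivity)
  have hsq : ε ^ 2 ≤ ‖x T - p‖ ^ 2 := by
    rw [← dist_eq_norm]
    gcongr
    exact hfar T hT
  simp only [hmT, mul_zero, add_zero] at hle
  linarith [pow_pos hε 2]

theorem exists_forall_annulus_inner_le [ProperSpace E] (hvc : Continuous v)
    (hv : ∀ y, y ≠ p → inner ℝ (y - p) (v y) < 0) (R : ℝ) {ε : ℝ} (hε : 0 < ε) :
    ∃ m > 0, ∀ y, ε ≤ dist y p → dist y p ≤ R → inner ℝ (y - p) (v y) ≤ -m := by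
  have hK : IsCompact (Metric.closedBall p R \ Metric.ball p ε) :=
    (isCompact_closedBall p R).diff Metric.isOpen_ball
  obtain ⟨m, hm, hle⟩ := hK.exists_forall_le' (f := fun y => -inner ℝ (y - p) (v y)) (a := 0)
    (by fun_prop) fun y hy => neg_pos.2 <| hv y <| by
      rintro rfl
      exact hy.2 (Metric.mem_ball_self hε)
  exact ⟨m, hm, fun y hεy hyR => le_neg.1 (hle y ⟨hyR, hεy.not_gt⟩)⟩

theorem tendsto_of_isIntegralCurveOn_of_inner_neg [ProperSpace E] (hvc : Continuous v)
    (hv : ∀ y, y ≠ p → inner ℝ (y - p) (v y) < 0)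
    (hx : IsIntegralCurveOn x (fun _ => v) (Set.Ici 0)) : Tendsto x atTop (nhds p) := by
  have hanti : AntitoneOn (fun t => dist (x t) p) (Set.Ici 0) := by
    refine antitoneOn_dist_of_inner_nonpos hx fun y => ?_
    rcases eq_or_ne y p with rfl | hy
    · simp
    · exact (hv y hy).le
  refine Metric.tendsto_atTop.2 fun ε hε => ?_
  obtain ⟨m, hm, hrate⟩ := exists_forall_annulus_inner_le hvc hv (dist (x 0) p) hε
  obtain ⟨T, hT, hTε⟩ := exists_dist_lt_of_inner_le hx hm hε fun t ht hεt =>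
    hrate (x t) hεt (hanti Set.self_mem_Ici ht ht)
  exact ⟨T, fun t ht => (hanti hT (hT.trans ht) ht).trans_lt hTε⟩

end Lyapunov

theorem average_convergence_of_even_general (h : ℝ → ℝ) (hcont : Continuous h) (xstar : ℝ)
    (hmono : StrictMonoOn h (Set.Ici xstar)) (heven : Function.Even fun s => h (xstar + s))
    (δ : ℝ) (hδ : 0 < δ) :
    (∀ x : ℝ, x ≠ xstar → 0 < (x - xstar) * b1 h δ x) ∧
    (∀ x : ℝ, b1 h δ x = 0 ↔ x = xstar) ∧
    (∀ γ : ℝ, 0 < γ → ∀ xa : ℝ → ℝ,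
      IsIntegralCurveOn xa (fun _ x => -(γ / 2) * b1 h δ x) (Set.Ici 0) →
      Tendsto xa atTop (nhds xstar)) := by
  have hpos : ∀ x : ℝ, x ≠ xstar → 0 < (x - xstar) * b1 h δ x := fun x hx =>
    (mul_pos_iff_of_pos_left hδ).1 (mul_b1_pos hcont hmono heven hδ.ne' hx)
  refine ⟨hpos, fun x => ⟨fun hx => ?_, fun hx => hx ▸ b1_eq_zero_of_even hcont heven⟩,
    fun γ hγ xa hxa => tendsto_of_isIntegralCurveOn_of_inner_neg ?_ (fun x hx => ?_) hxa⟩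
  · by_contra hne
    exact right_ne_zero_of_mul (hpos x hne).ne' hx
  · exact continuous_const.mul (continuous_b1 hcont δ)
  · rw [Real.inner_apply]
    linear_combination (γ / 2) * hpos x hx

/-- if `h̄` is even, `x*` is the unique equilibrium of the average system and
every solution converges to it. -/
theorem average_convergence_of_even (h : ℝ → ℝ) (hsmooth : ContDiff ℝ (⊤ : ℕ∞) h)
    (xstar : ℝ) (hmin : ∀ x : ℝ, x ≠ xstar → h xstar < h x)
    (α : ℝ → ℝ) (hα_cont : ContinuousOn α (Set.Ici 0))
    (hα_mono : StrictMonoOn α (Set.Ici 0)) (hα0 : α 0 = 0)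
    (hα_top : Tendsto α atTop atTop)
    (hlb : ∀ x₁ x₂ : ℝ, (x₁ - xstar) * (x₂ - xstar) ≥ 0 → α |x₂ - x₁| ≤ |h x₂ - h x₁|)
    (heven : ∀ s : ℝ, h (xstar + -s) - h xstar = h (xstar + s) - h xstar)
    (δ : ℝ) (hδ : 0 < δ) :
    (∀ x : ℝ, x ≠ xstar → 0 < (x - xstar) * b1 h δ x) ∧
    (∀ x : ℝ, b1 h δ x = 0 → x = xstar) ∧
    (∀ γ : ℝ, 0 < γ → ∀ xa : ℝ → ℝ, Differentiable ℝ xa →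
      (∀ t : ℝ, 0 ≤ t → HasDerivAt xa (-(γ / 2) * b1 h δ (xa t)) t) →
      Tendsto xa atTop (nhds xstar)) := by
  obtain ⟨hpos, hzero, hconv⟩ := average_convergence_of_even_general h hsmooth.continuous xstar
    (strictMonoOn_Ici_of_comp_abs_sub_le hsmooth.continuous hmin hα_mono hα0 hlb)
    (fun s => sub_left_inj.1 (heven s)) δ hδ
  exact ⟨hpos, fun x => (hzero x).1,
    fun γ hγ xa _ hxa => hconv γ hγ xa fun t ht => (hxa t ht).hasDerivWithinAt⟩
end

section
/- If α is a class-K∞ function, then the function δ̄*(s) := 2∫₀^{1/2} α(s·sin(2πt)) dt is itself a class-K∞ function: δ̄*(0) = 0, δ̄* is continuous and strictly increasing on [0,∞), and δ̄*(s) → ∞ as s → ∞. -/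
open Real MeasureTheory intervalIntegral Filter

/-! Only two features of the weight `sin (2πt)` on `(0, 1/2)` matter: it takes values in a bounded
interval `[0, C]`, and it is positive on a set of positive measure. For such a weight `w` over a
finite measure, continuity of `s ↦ ∫ α (s * w)` is dominated convergence, and strict monotonicity
follows from the strict pointwise inequality where `w > 0`. For unboundedness, `w ≥ ε` on a set of
positive measure for some `ε > 0`, and there `α (s * w) ≥ α (s * ε)`. -/

/-- Class-`K∞` comparison functions. Functions on `[0, ∞)` are encoded as functions on `ℝ` whose
values on negative arguments are irrelevant. -/
structure IsClassKInfty (α : ℝ → ℝ) : Prop where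
  continuousOn : ContinuousOn α (Set.Ici 0)
  strictMonoOn : StrictMonoOn α (Set.Ici 0)
  map_zero : α 0 = 0
  tendsto_atTop : Tendsto α atTop atTop

theorem IsClassKInfty.const_mul {α : ℝ → ℝ} (hα : IsClassKInfty α) {c : ℝ} (hc : 0 < c) :
    IsClassKInfty fun s ↦ c * α s where
  continuousOn := hα.continuousOn.const_mul c
  strictMonoOn _ ha _ hb hab := mul_lt_mul_of_pos_left (hα.strictMonoOn ha hb hab) hc
  map_zero := by rw [hα.map_zero, mul_zero]
  tendsto_atTop := hα.tendsto_atTop.const_mul_atTop hc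

theorem exists_pos_frequently_le {Ω : Type*} {l : Filter Ω} [CountableInterFilter l] {w : Ω → ℝ}
    (hw : ∃ᶠ x in l, 0 < w x) : ∃ ε > 0, ∃ᶠ x in l, ε ≤ w x := by
  contrapose! hw
  have hsmall : ∀ᶠ x in l, ∀ n : ℕ, w x < 1 / ((n : ℝ) + 1) :=
    eventually_countable_forall.2 fun n ↦ hw _ Nat.one_div_pos_of_nat
  filter_upwards [hsmall] with x hx
  exact ge_of_tendsto' tendsto_one_div_add_atTop_nhds_zero_nat fun n ↦ (hx n).le

section Measure

variable {Ω : Type*} [MeasurableSpace Ω] {μ : Measure Ω}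

theorem aemeasurable_comp_of_ae_mem {X Y : Type*} [MeasurableSpace X] [MeasurableSpace Y]
    {g : X → Y} {f : Ω → X} {S : Set X} (hS : MeasurableSet S)
    (hg : AEMeasurable g ((μ.map f).restrict S)) (hf : AEMeasurable f μ)
    (hfS : ∀ᵐ x ∂μ, f x ∈ S) : AEMeasurable (fun x ↦ g (f x)) μ := by
  rw [Measure.restrict_eq_self_of_ae_mem ((ae_map_iff hf hS).2 hfS)] at hg
  exact hg.comp_aemeasurable hf

theorem integrable_comp_of_monotoneOn_Icc [IsFiniteMeasure μ] {g : ℝ → ℝ} {f : Ω → ℝ} {a b : ℝ}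
    (hg : MonotoneOn g (Set.Icc a b)) (hf : AEMeasurable f μ)
    (hfab : ∀ᵐ x ∂μ, f x ∈ Set.Icc a b) : Integrable (fun x ↦ g (f x)) μ :=
  .of_mem_Icc (g a) (g b)
    (aemeasurable_comp_of_ae_mem measurableSet_Icc
      (aemeasurable_restrict_of_monotoneOn measurableSet_Icc hg) hf hfab)
    (hfab.mono fun _ hx ↦ hg.mapsTo_Icc hx)

theorem integral_lt_integral_of_ae_le_of_frequently_lt {f g : Ω → ℝ} (hf : Integrable f μ)
    (hg : Integrable g μ) (hle : f ≤ᵐ[μ] g) (hlt : ∃ᶠ x in ae μ, f x < g x) :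
    ∫ x, f x ∂μ < ∫ x, g x ∂μ := by
  refine (integral_mono_ae hf hg hle).lt_of_ne fun heq ↦ hlt ?_
  filter_upwards [(integral_eq_iff_of_ae_le hf hg hle).1 heq] with x hx
  exact hx.not_lt

variable [IsFiniteMeasure μ] {α : ℝ → ℝ} {w : Ω → ℝ} {C : ℝ}

theorem continuousOn_integral_comp_mul (hα : ContinuousOn α (Set.Ici 0)) (hw : AEMeasurable w μ)
    (hwC : ∀ᵐ x ∂μ, w x ∈ Set.Icc 0 C) :
    ContinuousOn (fun s ↦ ∫ x, α (s * w x) ∂μ) (Set.Ici 0) := by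
  intro s₀ hs₀
  obtain ⟨M, hM⟩ := isCompact_Icc.exists_bound_of_continuousOn
    (hα.mono (Set.Icc_subset_Ici_self : Set.Icc 0 ((s₀ + 1) * C) ⊆ Set.Ici 0))
  refine continuousWithinAt_of_dominated (bound := fun _ ↦ M) ?_ ?_ (integrable_const M) ?_
  · filter_upwards [self_mem_nhdsWithin] with s hs
    exact (aemeasurable_comp_of_ae_mem measurableSet_Ici (hα.aemeasurable measurableSet_Ici)
      (hw.const_mul s) (hwC.mono fun x hx ↦ mul_nonneg hs hx.1)).aestronglyMeasurable
  · filter_upwards [self_mem_nhdsWithin, nhdsWithin_le_nhds (Iic_mem_nhds (lt_add_one s₀))]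
      with s hs hs₁
    filter_upwards [hwC] with x hx
    exact hM _ ⟨mul_nonneg hs hx.1, mul_le_mul hs₁ hx.2 hx.1 (le_trans hs hs₁)⟩
  · filter_upwards [hwC] with x hx
    exact (hα.comp (continuousOn_id.mul_const (w x)) fun s hs ↦ mul_nonneg hs hx.1) s₀ hs₀

theorem integrable_comp_mul {s : ℝ} (hs : 0 ≤ s) (hα : MonotoneOn α (Set.Ici 0))
    (hw : AEMeasurable w μ) (hwC : ∀ᵐ x ∂μ, w x ∈ Set.Icc 0 C) :
    Integrable (fun x ↦ α (s * w x)) μ :=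
  integrable_comp_of_monotoneOn_Icc (b := s * C) (hα.mono Set.Icc_subset_Ici_self) (hw.const_mul s)
    (hwC.mono fun _ hx ↦ ⟨mul_nonneg hs hx.1, mul_le_mul_of_nonneg_left hx.2 hs⟩)

theorem strictMonoOn_integral_comp_mul (hα : StrictMonoOn α (Set.Ici 0)) (hw : AEMeasurable w μ)
    (hwC : ∀ᵐ x ∂μ, w x ∈ Set.Icc 0 C) (hw_pos : ∃ᶠ x in ae μ, 0 < w x) :
    StrictMonoOn (fun s ↦ ∫ x, α (s * w x) ∂μ) (Set.Ici 0) := by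
  intro s hs t ht hst
  refine integral_lt_integral_of_ae_le_of_frequently_lt
    (integrable_comp_mul hs hα.monotoneOn hw hwC)
    (integrable_comp_mul ht hα.monotoneOn hw hwC) ?_ ?_
  · filter_upwards [hwC] with x hx
    exact hα.monotoneOn (mul_nonneg hs hx.1) (mul_nonneg ht hx.1)
      (mul_le_mul_of_nonneg_right hst.le hx.1)
  · refine hw_pos.mono fun x hx ↦ ?_
    exact hα (mul_nonneg hs hx.le) (mul_nonneg ht hx.le) (mul_lt_mul_of_pos_right hst hx)

theorem le_integral_comp_mul {s ε : ℝ} (hs : 0 ≤ s) (hε : 0 ≤ ε) (hα : MonotoneOn α (Set.Ici 0))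
    (hw : AEMeasurable w μ) (hwC : ∀ᵐ x ∂μ, w x ∈ Set.Icc 0 C) :
    (α (s * ε) - α 0) * μ.real {x | ε ≤ w x} + μ.real Set.univ * α 0 ≤ ∫ x, α (s * w x) ∂μ := by
  have hint := integrable_comp_mul hs hα hw hwC
  have hα_ge {y : ℝ} (hy : 0 ≤ y) : 0 ≤ α y - α 0 := sub_nonneg.2 (hα Set.self_mem_Ici hy hy)
  have hsub : {x | ε ≤ w x} ⊆ {x | α (s * ε) - α 0 ≤ α (s * w x) - α 0} := fun x hx ↦
    sub_le_sub_right (hα (mul_nonneg hs hε) (mul_nonneg hs (hε.trans hx))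
      (mul_le_mul_of_nonneg_left hx hs)) _
  rw [← le_sub_iff_add_le]
  calc (α (s * ε) - α 0) * μ.real {x | ε ≤ w x}
      ≤ (α (s * ε) - α 0) * μ.real {x | α (s * ε) - α 0 ≤ α (s * w x) - α 0} :=
        mul_le_mul_of_nonneg_left (measureReal_mono hsub) (hα_ge (mul_nonneg hs hε))
    _ ≤ ∫ x, (α (s * w x) - α 0) ∂μ :=
        mul_meas_ge_le_integral_of_nonneg (hwC.mono fun x hx ↦ hα_ge (mul_nonneg hs hx.1))
          (hint.sub (integrable_const _)) _
    _ = ∫ x, α (s * w x) ∂μ - μ.real Set.univ * α 0 := by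
        rw [integral_sub hint (integrable_const _), MeasureTheory.integral_const, smul_eq_mul]

theorem tendsto_integral_comp_mul_atTop (hα : MonotoneOn α (Set.Ici 0))
    (hα_top : Tendsto α atTop atTop) (hw : AEMeasurable w μ)
    (hwC : ∀ᵐ x ∂μ, w x ∈ Set.Icc 0 C) (hw_pos : ∃ᶠ x in ae μ, 0 < w x) :
    Tendsto (fun s ↦ ∫ x, α (s * w x) ∂μ) atTop atTop := by
  obtain ⟨ε, hε, hεw⟩ := exists_pos_frequently_le hw_pos
  have hμ : 0 < μ.real {x | ε ≤ w x} :=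
    ENNReal.toReal_pos (frequently_ae_iff.1 hεw) (measure_ne_top _ _)
  have hα_scaled : Tendsto (fun s ↦ α (s * ε) - α 0) atTop atTop :=
    tendsto_atTop_add_const_right _ _ (hα_top.comp (tendsto_id.atTop_mul_const hε))
  refine tendsto_atTop_mono' _ ?_
    (tendsto_atTop_add_const_right _ (μ.real Set.univ * α 0) (hα_scaled.atTop_mul_const hμ))
  filter_upwards [eventually_ge_atTop 0] with s hs
  exact le_integral_comp_mul hs hε.le hα hw hwC

theorem deltastar_classKinfty_general (hα : IsClassKInfty α) (hw : AEMeasurable w μ)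
    (hwC : ∀ᵐ x ∂μ, w x ∈ Set.Icc 0 C) (hw_pos : ∃ᶠ x in ae μ, 0 < w x) :
    IsClassKInfty fun s ↦ ∫ x, α (s * w x) ∂μ where
  continuousOn := continuousOn_integral_comp_mul hα.continuousOn hw hwC
  strictMonoOn := strictMonoOn_integral_comp_mul hα.strictMonoOn hw hwC hw_pos
  map_zero := by simp only [zero_mul, hα.map_zero, integral_zero]
  tendsto_atTop :=
    tendsto_integral_comp_mul_atTop hα.strictMonoOn.monotoneOn hα.tendsto_atTop hw hwC hw_pos

end Measure

theorem IsClassKInfty.intervalIntegral_comp_mul {α w : ℝ → ℝ} {a b : ℝ} (hα : IsClassKInfty α)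
    (hab : a < b) (hw : ContinuousOn w (Set.Icc a b)) (hw_pos : ∀ t ∈ Set.Ioo a b, 0 < w t) :
    IsClassKInfty fun s ↦ ∫ t in a..b, α (s * w t) := by
  simp only [integral_of_le hab.le, integral_Ioc_eq_integral_Ioo]
  obtain ⟨C, hC⟩ := isCompact_Icc.bddAbove_image hw
  have : (ae (volume.restrict (Set.Ioo a b))).NeBot :=
    ae_restrict_neBot.2 (isOpen_Ioo.measure_ne_zero volume (Set.nonempty_Ioo.2 hab))
  refine deltastar_classKinfty_general (C := C) hα
    ((hw.mono Set.Ioo_subset_Icc_self).aemeasurable measurableSet_Ioo) ?_ ?_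
  · refine ae_restrict_of_forall_mem measurableSet_Ioo fun t ht ↦ ⟨(hw_pos t ht).le, ?_⟩
    exact hC (Set.mem_image_of_mem w (Set.Ioo_subset_Icc_self ht))
  · exact (ae_restrict_of_forall_mem measurableSet_Ioo hw_pos).frequently

theorem sin_two_pi_mul_pos {t : ℝ} (ht : t ∈ Set.Ioo (0 : ℝ) (1 / 2)) : 0 < sin (2 * π * t) :=
  sin_pos_of_pos_of_lt_pi (mul_pos two_pi_pos ht.1) (by nlinarith [pi_pos, ht.2])

/-- `δ̄*(s) := 2∫₀^{1/2} α(s sin(2πt)) dt` is a class-K∞ function. -/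
theorem deltastar_classKinfty (α : ℝ → ℝ)
    (hα_cont : ContinuousOn α (Set.Ici 0))
    (hα_mono : StrictMonoOn α (Set.Ici 0)) (hα0 : α 0 = 0)
    (hα_top : Tendsto α atTop atTop) :
    (2 * ∫ t in (0:ℝ)..(1/2), α ((0:ℝ) * Real.sin (2 * Real.pi * t)) = 0) ∧
    ContinuousOn (fun s : ℝ => 2 * ∫ t in (0:ℝ)..(1/2), α (s * Real.sin (2 * Real.pi * t)))
      (Set.Ici 0) ∧
    StrictMonoOn (fun s : ℝ => 2 * ∫ t in (0:ℝ)..(1/2), α (s * Real.sin (2 * Real.pi * t)))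
      (Set.Ici 0) ∧
    Tendsto (fun s : ℝ => 2 * ∫ t in (0:ℝ)..(1/2), α (s * Real.sin (2 * Real.pi * t)))
      atTop atTop := by
  have hα : IsClassKInfty α := ⟨hα_cont, hα_mono, hα0, hα_top⟩
  have hδ := (hα.intervalIntegral_comp_mul one_half_pos
    (by fun_prop : Continuous fun t ↦ sin (2 * π * t)).continuousOn
    fun _ ↦ sin_two_pi_mul_pos).const_mul two_pos
  exact ⟨hδ.map_zero, hδ.continuousOn, hδ.strictMonoOn, hδ.tendsto_atTop⟩
end
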